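/- arXiv:1402.6679 — 2 statements merged into one kernel-verified Lean document; each statement's English description precedes it below -/
import Mathlib

section
/- Let P ≥ 2 be a natural number and let q be the least prime greater than P. Let m ≥ 3 be a natural number with m + 1 < q². If for every prime p ≤ P and every natural number n ≥ 2 one has n·p ≠ m − 1 and n·p ≠ m + 1, then m − 1 and m + 1 are both prime. (After the sieve removing n·p ± 1 has been performed using all primes up to P, every surviving number below the effective upper limit q² − 2 is a central number of a twin prime pair.) -/
theorem eq_of_dvd_of_forall_two_le_mul_ne {d k : ℕ} (hk : k ≠ 0)
    (hproper : ∀ n : ℕ, 2 ≤ n → n * d ≠ k) (hdvd : d ∣ k) : d = k := by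
  obtain ⟨n, rfl⟩ := exists_eq_mul_left_of_dvd hdvd
  have hn_lt : n < 2 := not_le.mp fun hn => hproper n hn rfl
  have hn_pos : 0 < n := Nat.pos_of_ne_zero (left_ne_zero_of_mul hk)
  obtain rfl : n = 1 := by omega
  exact (one_mul d).symm

theorem prime_of_lt_sq_of_forall_prime_dvd_eq {k q : ℕ} (hk : 2 ≤ k) (hkq : k < q ^ 2)
    (hdvd : ∀ p : ℕ, Nat.Prime p → p < q → p ∣ k → p = k) : Nat.Prime k := by
  by_contra hnot_prime
  have hminFac : Nat.Prime k.minFac := Nat.minFac_prime (by omega)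
  have hminFac_sq : k.minFac ^ 2 < q ^ 2 :=
    (Nat.minFac_sq_le_self (by omega) hnot_prime).trans_lt hkq
  have hminFac_lt : k.minFac < q := lt_of_pow_lt_pow_left₀ 2 q.zero_le hminFac_sq
  have hminFac_eq : k.minFac = k := hdvd _ hminFac hminFac_lt k.minFac_dvd
  exact hnot_prime (hminFac_eq ▸ hminFac)

theorem prime_of_lt_sq_of_forall_prime_mul_ne {k q : ℕ} (hk : 2 ≤ k) (hkq : k < q ^ 2)
    (hsieve : ∀ p : ℕ, Nat.Prime p → p < q → ∀ n : ℕ, 2 ≤ n → n * p ≠ k) : Nat.Prime k :=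
  prime_of_lt_sq_of_forall_prime_dvd_eq hk hkq fun p hp hpq =>
    eq_of_dvd_of_forall_two_le_mul_ne (by omega) (hsieve p hp hpq)

/-- After sieving `n * p ± 1` with all primes `p ≤ P`, every surviving number below the
effective upper limit `q² - 2` (where `q` is the least prime greater than `P`) is a
central number of a twin prime pair. -/
theorem twin_prime_sieve_effective_upper_limit
    (P q m : ℕ) (hP : 2 ≤ P)
    (hq : Nat.Prime q) (hqP : P < q) (hleast : ∀ r : ℕ, Nat.Prime r → P < r → q ≤ r)
    (hm : 3 ≤ m) (hupper : m + 1 < q ^ 2)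
    (hsieve : ∀ p : ℕ, Nat.Prime p → p ≤ P → ∀ n : ℕ, 2 ≤ n →
      n * p ≠ m - 1 ∧ n * p ≠ m + 1) :
    Nat.Prime (m - 1) ∧ Nat.Prime (m + 1) := by
  have le_of_prime_lt (p : ℕ) (hp : Nat.Prime p) (hpq : p < q) : p ≤ P :=
    not_lt.mp fun hPp => (hleast p hp hPp).not_gt hpq
  constructor
  · exact prime_of_lt_sq_of_forall_prime_mul_ne (by omega) (by omega)
      fun p hp hpq n hn => (hsieve p hp (le_of_prime_lt p hp hpq) n hn).1
  · exact prime_of_lt_sq_of_forall_prime_mul_ne (by omega) hupper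
      fun p hp hpq n hn => (hsieve p hp (le_of_prime_lt p hp hpq) n hn).2
end

section
/- Let P ≥ 2 be a natural number and let q be the least prime greater than P. Let m be a natural number with 4 ≤ m and m + 2 ≤ q². If for every prime r ≤ P and every natural number n ≥ 2 one has m ≠ 2·n·r and m ≠ n·r − 1, then there exists a prime p with m = 2p and 2p + 1 prime. (After performing the Sophie Germain sieve using all primes up to P, every surviving number below the effective upper limit q² − 2 is the double of a Sophie Germain prime.) -/
/-!
A survivor `m` is even, since `n * 2 - 1` runs through the odd numbers from `3` on; write
`m = 2 * p`. Not being of the form `2 * (n * r)` or `n * r - 1` means that `p` and `2 * p + 1`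
respectively survive the sieve of Eratosthenes with the primes `r ≤ P`, that is, with the primes
`r < q`. Both are less than `q ^ 2`, so both are prime.
-/

theorem exists_prime_sq_le_and_eq_mul_of_not_prime {x : ℕ} (hx : 2 ≤ x) (hnp : ¬ x.Prime) :
    ∃ r n : ℕ, r.Prime ∧ r ^ 2 ≤ x ∧ 2 ≤ n ∧ x = n * r := by
  have hr : x.minFac.Prime := Nat.minFac_prime (by lia)
  have hle : x.minFac ≤ x / x.minFac := Nat.minFac_le_div (by lia) hnp
  exact ⟨x.minFac, x / x.minFac, hr, Nat.minFac_sq_le_self (by lia) hnp, hr.two_le.trans hle,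
    (Nat.div_mul_cancel x.minFac_dvd).symm⟩

theorem prime_of_lt_sq_of_forall_ne_mul {q x : ℕ} (hx : 2 ≤ x) (hxq : x < q ^ 2)
    (hsieve : ∀ r : ℕ, r.Prime → r < q → ∀ n : ℕ, 2 ≤ n → x ≠ n * r) : x.Prime := by
  by_contra hnp
  obtain ⟨r, n, hr, hrx, hn, hxnr⟩ := exists_prime_sq_le_and_eq_mul_of_not_prime hx hnp
  have hrq : r < q := lt_of_pow_lt_pow_left' 2 (hrx.trans_lt hxq)
  exact hsieve r hr hrq n hn hxnr

theorem even_of_forall_ne_mul_two_sub_one {m : ℕ} (hm : m ≠ 1)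
    (hsieve : ∀ n : ℕ, 2 ≤ n → m ≠ n * 2 - 1) : Even m := by
  by_contra hodd
  obtain ⟨k, rfl⟩ := Nat.not_even_iff_odd.mp hodd
  exact hsieve (k + 1) (by lia) (by lia)

/-- After performing the Sophie Germain sieve (removing `2 * n * r` and `n * r - 1`)
using all primes `r ≤ P`, every surviving number below the effective upper limit
`q² - 2` (where `q` is the least prime greater than `P`) is the double of a Sophie
Germain prime. -/
theorem sophie_germain_sieve_effective_upper_limit
    (P q m : ℕ) (hP : 2 ≤ P)
    (hq : Nat.Prime q) (hqP : P < q) (hleast : ∀ r : ℕ, Nat.Prime r → P < r → q ≤ r)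
    (hm : 4 ≤ m) (hupper : m + 2 ≤ q ^ 2)
    (hsieve : ∀ r : ℕ, Nat.Prime r → r ≤ P → ∀ n : ℕ, 2 ≤ n →
      m ≠ 2 * (n * r) ∧ m ≠ n * r - 1) :
    ∃ p : ℕ, Nat.Prime p ∧ m = 2 * p ∧ Nat.Prime (2 * p + 1) := by
  have hle_P : ∀ r : ℕ, r.Prime → r < q → r ≤ P := fun r hr hrq =>
    not_lt.mp fun hPr => (hleast r hr hPr).not_gt hrq
  have heven : Even m := even_of_forall_ne_mul_two_sub_one (by lia) fun n hn =>
    (hsieve 2 Nat.prime_two hP n hn).2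
  obtain ⟨p, rfl⟩ := heven.two_dvd
  have hp : p.Prime := by
    refine prime_of_lt_sq_of_forall_ne_mul (q := q) (by lia) (by lia) fun r hr hrq n hn hpnr => ?_
    exact (hsieve r hr (hle_P r hr hrq) n hn).1 (congrArg (2 * ·) hpnr)
  have hp_safe : (2 * p + 1).Prime := by
    refine prime_of_lt_sq_of_forall_ne_mul (q := q) (by lia) (by lia) fun r hr hrq n hn hnr => ?_
    exact (hsieve r hr (hle_P r hr hrq) n hn).2 (Nat.eq_sub_of_add_eq hnr)
  exact ⟨p, hp, rfl, hp_safe⟩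
end
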